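/- arXiv:2401.05938 — 3 statements merged into one kernel-verified Lean document; each statement's English description precedes it below -/
import Mathlib

section
/- For every fixed integers k ≥ 2 and ℓ ≥ 3, there are only finitely many k-dicritical digraphs that contain no oriented cycle on at least ℓ vertices (i.e., whose underlying undirected graph has no cycle of length at least ℓ). -/
/-- A directed cycle of `A` within the set `s`, given by its first vertex `v`
and the list `l` of remaining vertices. Its length (number of vertices/arcs)
is `(v :: l).length`. -/
def IsCycleOn {V : Type} (A : V → V → Prop) (s : Set V) (v : V) (l : List V) : Prop :=
  (∀ x ∈ v :: l, x ∈ s) ∧ (v :: l).Nodup ∧ List.Chain A v (l ++ [v])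

/-- `D[s]` admits a `k`-dicolouring: a colouring with no monochromatic directed cycle. -/
def DicolorableOn {V : Type} (A : V → V → Prop) (s : Set V) (k : ℕ) : Prop :=
  ∃ φ : V → Fin k, ∀ v l, IsCycleOn A s v l → ¬ (∀ x ∈ v :: l, φ x = φ v)

/-- `D[s]` is `k`-dicritical: its dichromatic number is `k` (not `(k-1)`-dicolourable but
`k`-dicolourable) and removing any vertex or any arc makes it `(k-1)`-dicolourable. -/
def Dicritical {V : Type} (A : V → V → Prop) (s : Set V) (k : ℕ) : Prop :=
  ¬ DicolorableOn A s (k - 1) ∧ DicolorableOn A s k ∧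
  (∀ v ∈ s, DicolorableOn A (s \ {v}) (k - 1)) ∧
  (∀ a b, a ∈ s → b ∈ s → A a b →
    DicolorableOn (fun x y => A x y ∧ ¬(x = a ∧ y = b)) s (k - 1))

/-- An oriented cycle: a cycle of the underlying undirected graph of the digraph `A`,
given by its vertices `v :: l` (pairwise distinct, at least 3, consecutively adjacent
in the underlying graph, cyclically). -/
def IsOrientedCycle {V : Type} (A : V → V → Prop) (v : V) (l : List V) : Prop :=
  (v :: l).Nodup ∧ List.Chain (fun a b => A a b ∨ A b a) v (l ++ [v]) ∧
    3 ≤ (v :: l).length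

/-!
Dicolourings pull back along homomorphisms, so a dicritical digraph is a core. Dicolourings of two
parts that share at most one vertex can be glued, so its underlying graph is 2-connected. Any two
vertices of a 2-connected graph are joined by two internally disjoint paths (Whitney), which are
short when all cycles are; a longer path between the same ends has to return to one of them after
every few steps, so all paths are short.

It remains to bound the size of a core without long paths. After the deletion of a set `X` of
vertices no two of the remaining components are isomorphic over `X`, since otherwise one of them
could be folded onto the other. Hence, when `X` has bounded size, there are boundedly many
components of bounded size. Deleting one more vertex `r` splits its component into components that
each contain a neighbour of `r`, from which only shorter paths start, and one inducts on the length
of the paths.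
-/

open Function Set SimpleGraph

section Dicolouring

variable {V W : Type} {A : V → V → Prop} {B : W → W → Prop} {s t : Set V} {v x : V} {l : List V}
  {k : ℕ}

theorem IsCycleOn.exists_perm_of_mem (h : IsCycleOn A s v l) (hx : x ∈ v :: l) :
    ∃ l', IsCycleOn A s x l' ∧ (x :: l').Perm (v :: l) := by
  obtain ⟨hs, hn, hc⟩ := h
  obtain ⟨p, q, hpq⟩ := List.append_of_mem hx
  have hrot : (v :: l) ~r (x :: (q ++ p)) := by
    rw [hpq]
    exact List.isRotated_append
  have hc' : Cycle.Chain A (x :: (q ++ p) : List V) := by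
    rwa [← Cycle.coe_eq_coe.2 hrot]
  exact ⟨q ++ p, ⟨fun z hz => hs z (hrot.mem_iff.2 hz), hrot.nodup_iff.1 hn, hc'⟩, hrot.perm.symm⟩

theorem exists_isCycleOn_of_isChain (hs : ∀ x ∈ v :: l, x ∈ s)
    (hc : List.IsChain A (v :: l ++ [v])) :
    ∃ w l', IsCycleOn A s w l' ∧ w :: l' ⊆ v :: l := by
  induction hl : l.length using Nat.strong_induction_on generalizing v l with
  | _ m ih =>
    subst hl
    by_cases hn : (v :: l).Nodup
    · exact ⟨v, l, ⟨hs, hn, hc⟩, List.Subset.refl _⟩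
    obtain ⟨a, p, q, r, hvl⟩ : ∃ a p q r, v :: l = p ++ a :: q ++ a :: r := by
      obtain ⟨a, ha⟩ := List.exists_duplicate_iff_not_nodup.2 hn
      obtain ⟨l₁, l₂, hl, h₁, h₂⟩ := List.cons_sublist_iff.1 (List.duplicate_iff_sublist.1 ha)
      obtain ⟨p, q, rfl⟩ := List.append_of_mem h₁
      obtain ⟨q', r, rfl⟩ := List.append_of_mem (List.singleton_sublist.1 h₂)
      exact ⟨a, p, q ++ q', r, by simp [hl]⟩
    have hsub : a :: q ⊆ v :: l := by
      rw [hvl]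
      grind
    have hlt : q.length < l.length := by
      have := congrArg List.length hvl
      simp only [List.length_cons, List.length_append] at this
      omega
    have hchain : List.IsChain A (a :: q ++ [a]) := by
      have hsplit : v :: l ++ [v] = p ++ (a :: q ++ [a] ++ (r ++ [v])) := by simp [hvl]
      rw [hsplit] at hc
      exact hc.right_of_append.left_of_append
    obtain ⟨w, l', hw, hsub'⟩ := ih _ hlt (fun x hx => hs x (hsub hx)) hchain rfl
    exact ⟨w, l', hw, fun x hx => hsub (hsub' hx)⟩

theorem DicolorableOn.comap {t' : Set W} (h : DicolorableOn B t' k) (f : A →r B)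
    (hf : MapsTo f s t') : DicolorableOn A s k := by
  obtain ⟨φ, hφ⟩ := h
  refine ⟨φ ∘ f, fun v l ⟨hs, _, hc⟩ hmono => ?_⟩
  have hchain : List.IsChain B (f v :: l.map f ++ [f v]) := by
    simpa using List.isChain_map_of_isChain f (fun _ _ => f.map_rel) hc
  have ht : ∀ y ∈ f v :: l.map f, y ∈ t' ∧ φ y = φ (f v) := by
    rw [← List.map_cons, List.forall_mem_map]
    exact fun x hx => ⟨hf (hs x hx), hmono x hx⟩
  obtain ⟨w, l', hw, hsub⟩ := exists_isCycleOn_of_isChain (fun y hy => (ht y hy).1) hchain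
  exact hφ w l' hw fun y hy =>
    (ht y (hsub hy)).2.trans (ht w (hsub List.mem_cons_self)).2.symm

theorem DicolorableOn.mono (h : DicolorableOn A t k) (hst : s ⊆ t) : DicolorableOn A s k :=
  h.comap (RelHom.id A) hst

theorem forall_mem_or_forall_mem_of_isChain (hA : ∀ a ∈ s \ t, ∀ b ∈ t \ s, ¬A a b ∧ ¬A b a)
    (hl : ∀ x ∈ l, x ∈ s \ t ∨ x ∈ t \ s) (hc : l.IsChain A) :
    (∀ x ∈ l, x ∈ s) ∨ ∀ x ∈ l, x ∈ t := by
  induction l with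
  | nil => simp
  | cons a l ih =>
    cases l with
    | nil => simpa using (hl a (by simp)).imp And.left And.left
    | cons b l =>
      rw [List.isChain_cons_cons] at hc
      have ha := hl a (by simp)
      have hb := hl b (by simp)
      rcases ih (fun x hx => hl x (List.mem_cons_of_mem a hx)) hc.2 with h | h <;>
        have := h b (by simp) <;> grind

theorem IsCycleOn.of_union (h : IsCycleOn A (s ∪ t) v l) (hst : (s ∩ t).Subsingleton)
    (hA : ∀ a ∈ s \ t, ∀ b ∈ t \ s, ¬A a b ∧ ¬A b a) :
    IsCycleOn A s v l ∨ IsCycleOn A t v l := by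
  suffices (∀ x ∈ v :: l, x ∈ s) ∨ ∀ x ∈ v :: l, x ∈ t from
    this.imp (fun hs => ⟨hs, h.2⟩) (fun ht => ⟨ht, h.2⟩)
  by_cases hy : ∃ y ∈ v :: l, y ∈ s ∩ t
  · obtain ⟨y, hy, hyst⟩ := hy
    obtain ⟨l', ⟨hmem, hn, hc⟩, hperm⟩ := h.exists_perm_of_mem hy
    have hl' : ∀ x ∈ l', x ∈ s \ t ∨ x ∈ t \ s := fun x hx => by
      have hxy : x ≠ y := by
        rintro rfl
        exact (List.nodup_cons.1 hn).1 hx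
      have hx' := hmem x (List.mem_cons_of_mem y hx)
      have : x ∉ s ∩ t := fun hxst => hxy (hst hxst hyst)
      grind
    have hc' : l'.IsChain A := hc.tail.left_of_append
    refine (forall_mem_or_forall_mem_of_isChain hA hl' hc').imp ?_ ?_ <;>
      exact fun hall x hx => by
        rcases List.mem_cons.1 (hperm.mem_iff.2 hx) with rfl | hx'
        exacts [by simp_all, hall x hx']
  · have hc : (v :: l).IsChain A := List.IsChain.left_of_append (l₂ := [v]) h.2.2
    refine forall_mem_or_forall_mem_of_isChain hA (fun x hx => ?_) hc
    have := h.1 x hx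
    grind

theorem DicolorableOn.union (hs : DicolorableOn A s k) (ht : DicolorableOn A t k)
    (hst : (s ∩ t).Subsingleton) (hA : ∀ a ∈ s \ t, ∀ b ∈ t \ s, ¬A a b ∧ ¬A b a) :
    DicolorableOn A (s ∪ t) k := by
  classical
  obtain ⟨φ, hφ⟩ := hs
  obtain ⟨ψ, hψ⟩ := ht
  obtain ⟨σ, hσ⟩ : ∃ σ : Equiv.Perm (Fin k), ∀ y ∈ s ∩ t, σ (ψ y) = φ y := by
    rcases hst.eq_empty_or_singleton with h | ⟨y, h⟩
    · exact ⟨1, by simp [h]⟩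
    · exact ⟨Equiv.swap (ψ y) (φ y), by simp [h]⟩
  let χ : V → Fin k := s.piecewise φ (σ ∘ ψ)
  have hχs : EqOn χ φ s := piecewise_eqOn s φ (σ ∘ ψ)
  have hχt : EqOn χ (σ ∘ ψ) t := fun v hv => by
    by_cases hvs : v ∈ s
    · exact (hχs hvs).trans (hσ v ⟨hvs, hv⟩).symm
    · exact piecewise_eq_of_notMem s φ (σ ∘ ψ) hvs
  refine ⟨χ, fun v l h hmono => ?_⟩
  rcases h.of_union hst hA with h | h
  · refine hφ v l h fun x hx => ?_
    rw [← hχs (h.1 x hx), ← hχs (h.1 v List.mem_cons_self), hmono x hx]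
  · refine hψ v l h fun x hx => σ.injective ?_
    exact (hχt (h.1 x hx)).symm.trans ((hmono x hx).trans (hχt (h.1 v List.mem_cons_self)))

end Dicolouring

section Biconnected

variable {V : Type*} {G : SimpleGraph V} {X : Set V} {u v x y : V} {ℓ : ℕ}

/-- The graph `G - X`. The deleted vertices are kept as isolated vertices, so that the vertex type
does not change. -/
def deleteVertices (G : SimpleGraph V) (X : Set V) : SimpleGraph V where
  Adj a b := G.Adj a b ∧ a ∉ X ∧ b ∉ X
  symm := ⟨fun _ _ h => ⟨h.1.symm, h.2.2, h.2.1⟩⟩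
  loopless := ⟨fun _ h => G.irrefl h.1⟩

theorem deleteVertices_adj {a b : V} :
    (deleteVertices G X).Adj a b ↔ G.Adj a b ∧ a ∉ X ∧ b ∉ X :=
  Iff.rfl

theorem deleteVertices_anti {Y : Set V} (h : X ⊆ Y) : deleteVertices G Y ≤ deleteVertices G X :=
  fun _ _ hab => ⟨hab.1, fun ha => hab.2.1 (h ha), fun hb => hab.2.2 (h hb)⟩

theorem deleteVertices_le (G : SimpleGraph V) (X : Set V) : deleteVertices G X ≤ G :=
  fun _ _ hab => hab.1

theorem deleteVertices_empty : deleteVertices G ∅ = G := by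
  ext
  simp [deleteVertices_adj]

theorem notMem_of_mem_support_deleteVertices (p : (deleteVertices G X).Walk u v) (hu : u ∉ X)
    (hx : x ∈ p.support) : x ∉ X := by
  induction p with
  | nil => simpa [List.mem_singleton.1 hx] using hu
  | cons h p ih =>
    rcases List.mem_cons.1 hx with rfl | hx
    exacts [hu, ih h.2.2 hx]

theorem reachable_deleteVertices_insert (p : (deleteVertices G X).Walk u v)
    (hx : x ∉ p.support) : (deleteVertices G (insert x X)).Reachable u v := by
  induction p with
  | nil => exact .refl _
  | @cons a b _ h p ih =>
    rw [Walk.support_cons, List.mem_cons, not_or] at hx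
    have hb : b ≠ x := by
      rintro rfl
      exact hx.2 p.start_mem_support
    have hadj : (deleteVertices G (insert x X)).Adj a b :=
      ⟨h.1, by simpa [Ne.symm hx.1] using h.2.1, by simpa [hb] using h.2.2⟩
    exact hadj.reachable.trans (ih hx.2)

theorem mem_of_adj_of_notMem_supp {a b : V} (hu : u ∉ X)
    (ha : a ∈ ((deleteVertices G X).connectedComponentMk u).supp)
    (hb : b ∉ ((deleteVertices G X).connectedComponentMk u).supp) (hab : G.Adj a b) : b ∈ X := by
  by_contra hbX
  obtain ⟨p⟩ := ConnectedComponent.exact ha.symm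
  have haX := notMem_of_mem_support_deleteVertices p hu p.end_mem_support
  have hadj : (deleteVertices G X).Adj a b := ⟨hab, haX, hbX⟩
  exact hb ((ConnectedComponent.connectedComponentMk_eq_of_adj hadj).symm.trans ha)

/-- A connected graph without cut vertices: it stays connected after the deletion of at most one
vertex. Dicritical digraphs have such underlying graphs. -/
def IsBiconnected (G : SimpleGraph V) : Prop :=
  ∀ X : Set V, X.Subsingleton → ∀ u ∉ X, ∀ v ∉ X, (deleteVertices G X).Reachable u v

theorem IsBiconnected.preconnected (hG : IsBiconnected G) : G.Preconnected := fun u v => by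
  simpa [deleteVertices_empty] using hG ∅ subsingleton_empty u (by simp) v (by simp)

/-- Two walks with the same ends that share no other vertex, so that two such paths form a cycle
unless they are the same edge. -/
def InternallyDisjoint (p q : G.Walk u v) : Prop :=
  ∀ x ∈ p.support, x ∈ q.support → x = u ∨ x = v

theorem InternallyDisjoint.symm {p q : G.Walk u v} (h : InternallyDisjoint p q) :
    InternallyDisjoint q p :=
  fun x hq hp => h x hp hq

theorem InternallyDisjoint.length_add_length_le {p q : G.Walk u v} (h : InternallyDisjoint p q)
    (hcyc : ∀ v (c : G.Walk v v), c.IsCycle → c.length ≤ ℓ) (hp : p.IsPath) (hq : q.IsPath) :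
    p.length + q.length ≤ ℓ + 2 := by
  by_cases hlen : p.length ≤ 1 ∧ q.length ≤ 1
  · omega
  have hdisj : p.support.tail.Disjoint q.reverse.support.tail := fun x hxp hxq => by
    have hp' := hp.support_nodup
    have hq' := hq.reverse.support_nodup
    rw [← p.cons_tail_support, List.nodup_cons] at hp'
    rw [← q.reverse.cons_tail_support, List.nodup_cons] at hq'
    have hxq' : x ∈ q.support := by simpa using List.mem_of_mem_tail hxq
    rcases h x (List.mem_of_mem_tail hxp) hxq' with rfl | rfl
    exacts [hp'.1 hxp, hq'.1 hxq]
  have hc := hcyc u _ (hp.isCycle_append hq.reverse hdisj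
    (by simp only [Walk.length_reverse]; omega))
  simp only [Walk.length_append, Walk.length_reverse] at hc
  omega

theorem isPath_append {p : G.Walk u v} {q : G.Walk v x} (hp : p.IsPath) (hq : q.IsPath)
    (h : ∀ a ∈ p.support, a ∈ q.support → a = v) : (p.append q).IsPath := by
  have hq' := hq.support_nodup
  rw [← q.cons_tail_support, List.nodup_cons] at hq'
  rw [Walk.isPath_def, Walk.support_append]
  refine hp.support_nodup.append hq'.2 fun a hap haq => ?_
  obtain rfl := h a hap (List.mem_of_mem_tail haq)
  exact hq'.1 haq

theorem exists_append_eq_of_end_mem (p : G.Walk u v) {S : Set V} (hv : v ∈ S) :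
    ∃ w ∈ S, ∃ (q : G.Walk u w) (r : G.Walk w v),
      q.append r = p ∧ ∀ a ∈ q.support, a ∈ S → a = w := by
  induction p with
  | nil => exact ⟨_, hv, .nil, .nil, rfl, by simp⟩
  | @cons a _ _ h p ih =>
    by_cases ha : a ∈ S
    · exact ⟨a, ha, .nil, p.cons h, rfl, by simp⟩
    obtain ⟨w, hw, q, r, rfl, hq⟩ := ih hv
    refine ⟨w, hw, q.cons h, r, rfl, ?_⟩
    simpa [ha] using hq

theorem InternallyDisjoint.exists_of_adj {z w : V} {p q : G.Walk y x}
    (h : InternallyDisjoint p q) (hp : p.IsPath) (hq : q.IsPath) (hadj : G.Adj z y) (hzx : z ≠ x)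
    {r : G.Walk z w} (hr : r.IsPath) (hyr : y ∉ r.support) (hwp : w ∈ p.support)
    (hw : ∀ a ∈ r.support, a ∈ p.support ∨ a ∈ q.support → a = w) :
    ∃ p' q' : G.Walk z x, p'.IsPath ∧ q'.IsPath ∧ InternallyDisjoint p' q' := by
  have hwy : w ≠ y := by
    rintro rfl
    exact hyr r.end_mem_support
  have hwq : w ∈ q.support → w = x := fun hwq => (h w hwp hwq).resolve_left hwy
  have hzq : z ∉ q.support := fun hzq => by
    obtain rfl := hw z r.start_mem_support (.inr hzq)
    exact hzx (hwq hzq)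
  obtain ⟨p₁, p₂, -, hp₂, rfl⟩ := hp.mem_support_iff_exists_append.1 hwp
  have hp₂_sub : p₂.support ⊆ (p₁.append p₂).support := Walk.support_subset_support_append_right ..
  have hyp₂ : y ∉ p₂.support := fun hy =>
    hp.ne_of_mem_support_of_append hwy.symm p₁.start_mem_support hy rfl
  refine ⟨r.append p₂, q.cons hadj, isPath_append hr hp₂ fun a har hap =>
    hw a har (.inl (hp₂_sub hap)), hq.cons hzq, fun a hap haq => ?_⟩
  rcases List.mem_cons.1 haq with rfl | haq
  · exact .inl rfl
  refine .inr ?_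
  rcases (Walk.mem_support_append_iff ..).1 hap with har | hap
  · obtain rfl := hw a har (.inr haq)
    exact hwq haq
  · refine (h a (hp₂_sub hap) haq).resolve_left ?_
    rintro rfl
    exact hyp₂ hap

theorem IsBiconnected.exists_internallyDisjoint (hG : IsBiconnected G) (u v : V) :
    ∃ p q : G.Walk u v, p.IsPath ∧ q.IsPath ∧ InternallyDisjoint p q := by
  classical
  induction (hG.preconnected u v).some with
  | nil => exact ⟨.nil, .nil, .nil, .nil, by simp [InternallyDisjoint]⟩
  | @cons z y x hadj _ ih =>
    by_cases hzx : z = x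
    · subst hzx
      exact ⟨.nil, .nil, .nil, .nil, by simp [InternallyDisjoint]⟩
    by_cases hyx : y = x
    · subst hyx
      exact ⟨hadj.toWalk, hadj.toWalk, .of_adj hadj, .of_adj hadj, by simp [InternallyDisjoint]⟩
    obtain ⟨p, q, hp, hq, hpq⟩ := ih
    obtain ⟨r, hr, hyr⟩ : ∃ r : G.Walk z x, r.IsPath ∧ y ∉ r.support := by
      obtain ⟨r, hr⟩ := (hG {y} subsingleton_singleton z hadj.ne x (Ne.symm hyx)).exists_isPath
      refine ⟨r.mapLe (deleteVertices_le G {y}), hr.mapLe _, fun hy => ?_⟩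
      exact notMem_of_mem_support_deleteVertices r hadj.ne (by simpa using hy) rfl
    obtain ⟨w, hw, r, r', rfl, hrw⟩ :=
      exists_append_eq_of_end_mem r (S := {a | a ∈ p.support ∨ a ∈ q.support})
        (.inl p.end_mem_support)
    have hyr' : y ∉ r.support := fun h => hyr (Walk.support_subset_support_append_left _ _ h)
    rcases hw with hw | hw
    · exact hpq.exists_of_adj hp hq hadj hzx hr.of_append_left hyr' hw hrw
    · exact hpq.symm.exists_of_adj hq hp hadj hzx hr.of_append_left hyr' hw
        fun a ha haqp => hrw a ha haqp.symm

theorem exists_isPath_support_subset (p : G.Walk x y) (hu : u ∈ p.support) (hv : v ∈ p.support) :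
    ∃ q : G.Walk u v, q.IsPath ∧ q.support ⊆ p.support := by
  classical
  let q : G.Walk u v := (p.takeUntil u hu).reverse.append (p.takeUntil v hv)
  refine ⟨q.bypass, q.bypass_isPath, fun a ha => ?_⟩
  rcases (Walk.mem_support_append_iff ..).1 (q.support_bypass_subset_support ha) with ha | ha
  · exact p.support_takeUntil_subset_support hu (by simpa using ha)
  · exact p.support_takeUntil_subset_support hv ha

theorem length_le_mul_countP [DecidableEq V]
    (hcyc : ∀ v (c : G.Walk v v), c.IsCycle → c.length ≤ ℓ) (q : G.Walk x y) (p : G.Walk u v)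
    (hp : p.IsPath) (hu : u ∈ q.support) (hv : v ∈ q.support) :
    p.length ≤ (ℓ + 2) * p.support.tail.countP (· ∈ q.support) := by
  induction hn : p.length using Nat.strong_induction_on generalizing u p with
  | _ n ih =>
    subst hn
    cases p with
    | nil => simp
    | cons h p =>
      obtain ⟨w, hw, p₁, p₂, rfl, hp₁⟩ :=
        exists_append_eq_of_end_mem p (S := {a | a ∈ q.support}) hv
      obtain ⟨r, hr, hrq⟩ := exists_isPath_support_subset q hu hw
      have hdisj : InternallyDisjoint (p₁.cons h) r := fun a ha har =>
        (List.mem_cons.1 ha).imp_right fun ha => hp₁ a ha (hrq har)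
      rw [← Walk.cons_append] at hp
      -- A detour of `p` away from `q` closes up to a cycle along `q`, so it is short.
      have hgap := hdisj.length_add_length_le hcyc hp.of_append_left hr
      have hrest := ih _ (by simp) p₂ hp.of_append_right hw rfl
      have hcount : 0 < p₁.support.countP (· ∈ q.support) :=
        List.countP_pos_iff.2 ⟨w, p₁.end_mem_support, by simpa using hw⟩
      simp only [Walk.length_cons, Walk.length_append, Walk.support_cons, List.tail_cons,
        Walk.support_append, List.countP_append] at hgap ⊢
      nlinarith

theorem IsBiconnected.length_le (hG : IsBiconnected G)
    (hcyc : ∀ v (c : G.Walk v v), c.IsCycle → c.length ≤ ℓ) (p : G.Walk u v) (hp : p.IsPath) :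
    p.length ≤ (ℓ + 2) * (ℓ + 3) := by
  classical
  obtain ⟨q, r, hq, hr, hqr⟩ := hG.exists_internallyDisjoint u v
  have hqℓ : q.length ≤ ℓ + 2 := by
    have := hqr.length_add_length_le hcyc hq hr
    omega
  refine (length_le_mul_countP hcyc q p hp q.start_mem_support q.end_mem_support).trans
    (Nat.mul_le_mul_left _ ?_)
  have hsub : (p.support.tail.filter (· ∈ q.support)).Subperm q.support :=
    List.subperm_of_subset (hp.support_nodup.tail.filter _) fun a ha => by
      simpa using List.of_mem_filter ha
  rw [List.countP_eq_length_filter]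
  have := hsub.length_le
  rw [Walk.length_support] at this
  omega

end Biconnected

section Core

variable {V ι κ : Type*} {A : V → V → Prop}

/-- A digraph all of whose endomorphisms are surjective; for finite digraphs, these are the cores
of homomorphism theory. Dicritical digraphs have this property because a dicolouring can be pulled
back along a homomorphism. -/
def IsCore (A : V → V → Prop) : Prop :=
  ∀ f : A →r A, Surjective f

theorem exists_relHom_of_onFun_eq {e e' : ι → V} {X : κ → V}
    (hclosed : ∀ v ∈ range e, ∀ w ∉ range e, A v w ∨ A w v → w ∈ range X)
    (hiso : (A on Sum.elim e X) = (A on Sum.elim e' X)) :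
    ∃ f : A →r A, MapsTo f (range e) (range e') ∧ ∀ v ∉ range e, f v = v := by
  classical
  have hiso' (a b : ι ⊕ κ) :
      A (Sum.elim e X a) (Sum.elim e X b) ↔ A (Sum.elim e' X a) (Sum.elim e' X b) :=
    iff_of_eq (congrFun₂ hiso a b)
  let f : V → V := fun v => if h : v ∈ range e then e' h.choose else v
  have hf_of_mem {v : V} (hv : v ∈ range e) : ∃ i, e i = v ∧ f v = e' i :=
    ⟨hv.choose, hv.choose_spec, dif_pos hv⟩
  have hf_of_notMem {v : V} (hv : v ∉ range e) : f v = v := dif_neg hv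
  have hf_hom {v w : V} (hvw : A v w) : A (f v) (f w) := by
    by_cases hv : v ∈ range e <;> by_cases hw : w ∈ range e
    · obtain ⟨i, rfl, hi⟩ := hf_of_mem hv
      obtain ⟨j, rfl, hj⟩ := hf_of_mem hw
      rw [hi, hj]
      exact (hiso' (.inl i) (.inl j)).1 hvw
    · obtain ⟨x, rfl⟩ := hclosed v hv w hw (.inl hvw)
      obtain ⟨i, rfl, hi⟩ := hf_of_mem hv
      rw [hi, hf_of_notMem hw]
      exact (hiso' (.inl i) (.inr x)).1 hvw
    · obtain ⟨x, rfl⟩ := hclosed w hw v hv (.inr hvw)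
      obtain ⟨j, rfl, hj⟩ := hf_of_mem hw
      rw [hf_of_notMem hv, hj]
      exact (hiso' (.inr x) (.inl j)).1 hvw
    · rwa [hf_of_notMem hv, hf_of_notMem hw]
  refine ⟨⟨f, hf_hom⟩, fun v hv => ?_, fun v => hf_of_notMem⟩
  obtain ⟨i, -, hi⟩ := hf_of_mem hv
  exact ⟨i, hi.symm⟩

theorem IsCore.not_disjoint_range [Nonempty ι] (hA : IsCore A) {e e' : ι → V} {X : κ → V}
    (hclosed : ∀ v ∈ range e, ∀ w ∉ range e, A v w ∨ A w v → w ∈ range X)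
    (hiso : (A on Sum.elim e X) = (A on Sum.elim e' X)) :
    ¬Disjoint (range e) (range e') := by
  intro hdisj
  obtain ⟨f, hf_mem, hf_notMem⟩ := exists_relHom_of_onFun_eq hclosed hiso
  obtain ⟨v, hv⟩ := hA f (e (Classical.arbitrary ι))
  have hfv : f v ∈ range e := ⟨_, hv.symm⟩
  by_cases hve : v ∈ range e
  · exact disjoint_left.1 hdisj hfv (hf_mem hve)
  · exact hve (hf_notMem v hve ▸ hfv)

theorem exists_range_eq_of_encard_le {s : Set V} {n : ℕ} (hs : s.Nonempty) (hn : s.encard ≤ n) :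
    ∃ e : Fin n → V, range e = s := by
  have := hs.to_subtype
  have := (finite_of_encard_le_coe hn).fintype
  obtain ⟨g⟩ : Nonempty (s ↪ Fin n) := Function.Embedding.nonempty_of_card_le <| by
    rw [encard_eq_coe_toFinset_card, toFinset_card] at hn
    simpa only [Fintype.card_fin] using Nat.cast_le.1 hn
  refine ⟨(↑) ∘ invFun g, ?_⟩
  rw [(invFun_surjective g.injective).range_comp, Subtype.range_coe]

theorem IsCore.encard_setOf_encard_supp_le [Finite κ] (hA : IsCore A) (X : κ → V) (B : ℕ) :
    {v | v ∉ range X ∧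
      ((deleteVertices (fromRel A) (range X)).connectedComponentMk v).supp.encard ≤ B}.encard ≤
      Nat.card ((Fin B ⊕ κ → Fin B ⊕ κ → Prop) × Fin B) := by
  set H := deleteVertices (fromRel A) (range X)
  set S := {v | v ∉ range X ∧ (H.connectedComponentMk v).supp.encard ≤ B}
  let comp (v : S) : {c : H.ConnectedComponent // c.supp.encard ≤ B} :=
    ⟨H.connectedComponentMk v, v.2.2⟩
  have hcomp (v : S) : (v : V) ∈ (comp v).1.supp := rfl
  choose e he using fun c : {c : H.ConnectedComponent // c.supp.encard ≤ B} =>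
    exists_range_eq_of_encard_le c.1.nonempty_supp c.2
  choose index hindex using fun v : S => (he (comp v)).symm ▸ hcomp v
  -- The isomorphism type over `X` of the component of `v`, and the place of `v` in it.
  let type (v : S) : (Fin B ⊕ κ → Fin B ⊕ κ → Prop) × Fin B :=
    (A on Sum.elim (e (comp v)) X, index v)
  have htype : Injective type := fun v w hvw => by
    obtain ⟨hiso, hidx⟩ := Prod.mk.inj hvw
    have : Nonempty (Fin B) := ⟨index v⟩
    have hvw : comp v = comp w := by
      by_contra hne
      refine hA.not_disjoint_range (fun a ha b hb hab => ?_) hiso ?_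
      · rw [he] at ha hb
        refine mem_of_adj_of_notMem_supp v.2.1 ha hb ⟨?_, hab⟩
        rintro rfl
        exact hb ha
      · rw [he, he]
        exact pairwise_disjoint_supp_connectedComponent H (Subtype.coe_ne_coe.2 hne)
    exact Subtype.ext (by rw [← hindex v, ← hindex w, hvw, hidx])
  rw [← ENat.card_eq_coe_natCard]
  exact ENat.card_le_card_of_injective htype

theorem exists_forall_isCore_encard_supp_le (p m : ℕ) :
    ∃ B : ℕ, ∀ (V : Type*) (A : V → V → Prop) (X : Fin m → V) (r : V), IsCore A → r ∉ range X →
      (∀ v (q : (deleteVertices (fromRel A) (range X)).Walk r v), q.IsPath → q.length < p) →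
      ((deleteVertices (fromRel A) (range X)).connectedComponentMk r).supp.encard ≤ B := by
  induction p generalizing m with
  | zero => exact ⟨0, fun V A X r _ _ hp => absurd (hp r .nil .nil) (Nat.not_lt_zero _)⟩
  | succ p ih =>
    obtain ⟨B, hB⟩ := ih (m + 1)
    refine ⟨Nat.card ((Fin B ⊕ Fin (m + 1) → Fin B ⊕ Fin (m + 1) → Prop) × Fin B) + 1,
      fun V A X r hA hr hp => ?_⟩
    set Y : Fin (m + 1) → V := Fin.cons r X
    have hY : range Y = insert r (range X) := Fin.range_cons r X
    refine (encard_le_encard fun v hv => ?_).trans <| (encard_insert_le _ r).trans <|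
      add_le_add_left (hA.encard_setOf_encard_supp_le Y B) 1
    obtain ⟨q, hq⟩ := (ConnectedComponent.exact hv).symm.exists_isPath
    cases q with
    | nil => exact .inl rfl
    | @cons _ s _ hrs q =>
      have hrq := ((Walk.cons_isPath_iff hrs q).1 hq).2
      have hsv : (deleteVertices (fromRel A) (range Y)).Reachable s v :=
        hY ▸ reachable_deleteVertices_insert q hrq
      have hs : s ∉ range Y := by
        rw [hY]
        rintro (rfl | hsX)
        exacts [hrs.ne rfl, hrs.2.2 hsX]
      have hvY : v ∉ range Y :=
        notMem_of_mem_support_deleteVertices hsv.some hs hsv.some.end_mem_support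
      refine .inr ⟨hvY, ?_⟩
      rw [← ConnectedComponent.sound hsv]
      refine hB V A Y s hA hs fun w q' hq' => ?_
      have hr_q' : r ∉ q'.support := fun h =>
        notMem_of_mem_support_deleteVertices q' hs h (hY ▸ mem_insert r _)
      have hle : deleteVertices (fromRel A) (range Y) ≤ deleteVertices (fromRel A) (range X) :=
        deleteVertices_anti (hY ▸ subset_insert r _)
      have := hp w ((q'.mapLe hle).cons hrs) ((hq'.mapLe hle).cons (by simpa using hr_q'))
      simpa using this

end Core

section Dicritical

variable {V : Type} {A : V → V → Prop} {k : ℕ}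

theorem Dicritical.isCore (h : Dicritical A univ k) : IsCore A := fun f => by
  by_contra hf
  obtain ⟨v, hv⟩ := not_forall.1 hf
  refine h.1 ((h.2.2.1 v (mem_univ v)).comap f fun w _ => ⟨mem_univ _, ?_⟩)
  exact fun hw => hv ⟨w, hw⟩

theorem Dicritical.isBiconnected (h : Dicritical A univ k) : IsBiconnected (fromRel A) := by
  intro X hX u hu v hv
  by_contra huv
  set S := ((deleteVertices (fromRel A) X).connectedComponentMk u).supp
  have huS : u ∈ S := rfl
  have hvS : v ∉ S := fun hvS => huv (ConnectedComponent.exact hvS).symm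
  have hs : DicolorableOn A (S ∪ X) (k - 1) := (h.2.2.1 v (mem_univ v)).mono <|
    subset_sdiff_singleton (subset_univ _) (not_or.2 ⟨hvS, hv⟩)
  have ht : DicolorableOn A Sᶜ (k - 1) := (h.2.2.1 u (mem_univ u)).mono <|
    subset_sdiff_singleton (subset_univ _) (not_not.2 huS)
  have hunion : S ∪ X ∪ Sᶜ = univ := by
    rw [union_right_comm, union_compl_self, univ_union]
  have hinter : ((S ∪ X) ∩ Sᶜ).Subsingleton := hX.anti fun w hw => hw.1.resolve_left hw.2
  refine h.1 (hunion ▸ hs.union ht hinter fun a ha b hb => not_or.1 fun hab => hb.2 (.inr ?_))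
  have hne : a ≠ b := fun h => hb.2 (h ▸ ha.1)
  exact mem_of_adj_of_notMem_supp hu (not_not.1 ha.2) hb.1 ⟨hne, hab⟩

theorem exists_isOrientedCycle_of_isCycle {v : V} {c : (fromRel A).Walk v v} (hc : c.IsCycle) :
    ∃ l, IsOrientedCycle A v l ∧ (v :: l).length = c.length := by
  cases c with
  | nil => exact absurd hc Walk.not_isCycle_nil
  | cons h p =>
    have hp := ((Walk.cons_isCycle_iff p h).1 hc).1
    have hlen : (v :: p.support.dropLast).length = (p.cons h).length := by simp
    have hnodup : (v :: p.support.dropLast).Nodup := by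
      rw [← (List.perm_append_singleton v _).nodup_iff, p.dropLast_support_concat]
      exact hp.support_nodup
    have hchain : List.IsChain (fun a b => A a b ∨ A b a) (v :: (p.support.dropLast ++ [v])) := by
      rw [p.dropLast_support_concat]
      exact (p.cons h).isChain_adj_support.imp fun _ _ hab => hab.2
    exact ⟨p.support.dropLast, ⟨hnodup, hchain, hlen ▸ hc.three_le_length⟩, hlen⟩

end Dicritical

theorem stmt2_general (ℓ : ℕ) :
    ∃ N : ℕ, ∀ (k : ℕ) (V : Type) (A : V → V → Prop), 2 ≤ k → Dicritical A univ k →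
      (∀ v l, IsOrientedCycle A v l → (v :: l).length < ℓ) → ENat.card V ≤ N := by
  obtain ⟨N, hN⟩ := exists_forall_isCore_encard_supp_le ((ℓ + 2) * (ℓ + 3) + 1) 0
  refine ⟨N, fun k V A _ hA hℓ => ?_⟩
  cases isEmpty_or_nonempty V with
  | inl _ => simp [ENat.card_eq_zero_iff_empty V |>.2]
  | inr hne =>
    obtain ⟨r⟩ := hne
    have hcyc (v : V) (c : (fromRel A).Walk v v) (hc : c.IsCycle) : c.length ≤ ℓ := by
      obtain ⟨l, hl, hlen⟩ := exists_isOrientedCycle_of_isCycle hc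
      exact hlen ▸ (hℓ v l hl).le
    have hN := hN V A Fin.elim0 r hA.isCore
    rw [range_eq_empty, deleteVertices_empty] at hN
    have hsupp : ((fromRel A).connectedComponentMk r).supp = univ :=
      eq_univ_of_forall fun v => ConnectedComponent.sound (hA.isBiconnected.preconnected v r)
    rw [← encard_univ, ← hsupp]
    exact hN (notMem_empty r) fun v q hq =>
      Nat.lt_succ_of_le (hA.isBiconnected.length_le hcyc q hq)

/-- For fixed `k ≥ 2` and `ℓ ≥ 3`, there are only finitely many `k`-dicritical digraphs
with no oriented cycle on at least `ℓ` vertices: their number of vertices is bounded. -/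
theorem stmt2 (k ℓ : ℕ) (hk : 2 ≤ k) (hl : 3 ≤ ℓ) :
    ∃ N : ℕ, ∀ (n : ℕ) (A : Fin n → Fin n → Prop), (∀ v, ¬ A v v) →
      Dicritical A Set.univ k →
      (∀ v l', IsOrientedCycle A v l' → (v :: l').length < ℓ) →
      n ≤ N := by
  obtain ⟨N, hN⟩ := stmt2_general ℓ
  exact ⟨N, fun n A _ hA hℓ => by simpa using hN k (Fin n) A hk hA hℓ⟩
end

section
/- Let k ≥ 1 and let F be a digraph with at least one vertex. If F* is obtained from F by subdividing every arc at most k−1 times, then every digraph D with digirth at least k and dichromatic number at least (4^{m(F)+1}·n(F) − 1)/3 contains a subdivision of F*, where n(F) and m(F) are the number of vertices and arcs of F. -/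
/-- The digraph `A` contains a subdivision of `B` in which, for every arc `(u,v)` of `B`,
the directed path replacing `(u,v)` has at least `s u v` internal vertices. Equivalently,
`A` contains a subdivision of the digraph obtained from `B` by subdividing each arc
`(u,v)` exactly `s u v` times. -/
def ContainsSubdivisionGE {W V : Type} (B : W → W → Prop) (s : W → W → ℕ)
    (A : V → V → Prop) : Prop :=
  ∃ (f : W → V) (p : W → W → List V),
    Function.Injective f ∧
    (∀ u v, B u v → List.Chain A (f u) (p u v ++ [f v])) ∧
    (∀ u v, B u v → (f u :: (p u v ++ [f v])).Nodup) ∧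
    (∀ u v, B u v → ∀ x ∈ p u v, ∀ w : W, x ≠ f w) ∧
    (∀ u v u' v', B u v → B u' v' → (u, v) ≠ (u', v') → ∀ x ∈ p u v, x ∉ p u' v') ∧
    (∀ u v, B u v → s u v ≤ (p u v).length)

/-- The dichromatic number of the digraph `A`. -/
noncomputable def dichromaticNumber {V : Type} (A : V → V → Prop) : ℕ :=
  sInf {k | DicolorableOn A Set.univ k}

/-!
Let `χ` denote the dichromatic number of `D` or of its restriction to a set of vertices. Some strong
component has the same `χ` as `D`. Splitting it by the distance from a root `x`, and then by the
distance to `x`, divides `χ` by at most `2` each time: an arc raises the first distance, and lowers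
the second, by at most one, so no directed cycle within the even or within the odd levels meets two
of them. Two vertices of the resulting set `H` are joined by a shortest path to `x` followed by a
shortest path from `x`, and the inner vertices of both avoid `H`.

To make these paths long, remove from `H` a maximal acyclic set `S`, at the cost of one colour. Each
remaining vertex `u` lies on a directed cycle of `S ∪ {u}`, of length at least `k`; a path from `u`
to `v` follows this cycle up to its last vertex and continues outside `H`.

Finally remove the arcs of `F` one by one, passing to such a set `H` each time: a subdivision of `F`
minus an arc found inside `H` extends by a path that is internally disjoint from `H`. Each arc turns
a requirement `N` on `χ` into `4 N + 1`, starting from `n` for `n` isolated vertices.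
-/

section Acyclic

variable {V : Type} {A : V → V → Prop} {S T : Set V}

theorem IsCycleOn.mono {v : V} {l : List V} (h : IsCycleOn A S v l) (hST : ∀ x ∈ v :: l, x ∈ T) :
    IsCycleOn A T v l :=
  ⟨hST, h.2⟩

theorem IsCycleOn.chain {v : V} {l : List V} (h : IsCycleOn A S v l) :
    Cycle.Chain A (v :: l : List V) :=
  (Cycle.chain_coe_cons A v l).2 h.2.2

theorem IsCycleOn.of_isRotated {v w : V} {l m : List V} (h : IsCycleOn A S v l)
    (hrot : (v :: l).IsRotated (w :: m)) : IsCycleOn A S w m := by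
  refine ⟨fun x hx => h.1 x (hrot.mem_iff.2 hx), hrot.nodup_iff.1 h.2.1, ?_⟩
  have hchain := h.chain
  rw [Cycle.coe_eq_coe.2 hrot] at hchain
  exact (Cycle.chain_coe_cons A w m).1 hchain

theorem IsCycleOn.exists_of_mem {v x : V} {l : List V} (h : IsCycleOn A S v l) (hx : x ∈ v :: l) :
    ∃ m, IsCycleOn A S x m := by
  obtain ⟨a, b, hab⟩ := List.append_of_mem hx
  exact ⟨b ++ a, h.of_isRotated (hab ▸ List.isRotated_append)⟩

theorem IsCycleOn.eq_of_monotone {α : Type*} [PartialOrder α] {g : V → α} {v x : V} {l : List V}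
    (h : IsCycleOn A S v l) (hg : ∀ a ∈ S, ∀ b ∈ S, A a b → g a ≤ g b) (hx : x ∈ v :: l) :
    g x = g v := by
  have hmem : ∀ y ∈ v :: (l ++ [v]), y ∈ S := fun y hy => h.1 y (by simpa [or_comm] using hy)
  have hle : Cycle.Chain (g · ≤ g ·) (v :: l : List V) :=
    (Cycle.chain_coe_cons _ v l).2 <| List.IsChain.imp_of_mem_imp
      (fun a b ha hb hab => hg a (hmem a ha) b (hmem b hb) hab) h.2.2
  have : IsTrans V (g · ≤ g ·) := ⟨fun _ _ _ => le_trans⟩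
  have hall := Cycle.chain_iff_pairwise.1 hle
  exact le_antisymm (hall x hx v List.mem_cons_self) (hall v List.mem_cons_self x hx)

/-- The subdigraph induced by `S` is acyclic. -/
def IsAcyclicOn (A : V → V → Prop) (S : Set V) : Prop :=
  ∀ v l, ¬ IsCycleOn A S v l

theorem IsAcyclicOn.mono (hT : IsAcyclicOn A T) (hST : S ⊆ T) : IsAcyclicOn A S :=
  fun v l hc => hT v l (hc.mono fun x hx => hST (hc.1 x hx))

theorem isAcyclicOn_singleton (hirr : ∀ v, ¬ A v v) (a : V) : IsAcyclicOn A {a} := by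
  rintro v (_ | ⟨w, l⟩) ⟨hmem, hnd, hchain⟩
  · exact hirr v (List.isChain_pair.1 hchain)
  · have hv : v = a := hmem v (by simp)
    have hw : w = a := hmem w (by simp)
    simp [hv, hw] at hnd

theorem IsAcyclicOn.exists_cycle_of_insert {u : V} (hS : IsAcyclicOn A S)
    (hu : ¬ IsAcyclicOn A (insert u S)) :
    ∃ l, IsCycleOn A (insert u S) u l ∧ ∀ x ∈ l, x ∈ S := by
  simp only [IsAcyclicOn, not_forall, not_not] at hu
  obtain ⟨v, l, hc⟩ := hu
  have huc : u ∈ v :: l := by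
    by_contra huc
    exact hS v l (hc.mono fun x hx => (hc.1 x hx).resolve_left fun h => huc (h ▸ hx))
  obtain ⟨m, hm⟩ := hc.exists_of_mem huc
  refine ⟨m, hm, fun x hx => (hm.1 x (List.mem_cons_of_mem _ hx)).resolve_left ?_⟩
  rintro rfl
  exact (List.nodup_cons.1 hm.2.1).1 hx

theorem exists_maximal_isAcyclicOn (A : V → V → Prop) (H : Set V) :
    ∃ S, Maximal (fun S => S ⊆ H ∧ IsAcyclicOn A S) S := by
  have hfin : Order.IsOfFiniteCharacter {S | S ⊆ H ∧ IsAcyclicOn A S} := by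
    refine fun S => ⟨fun hS R hR _ => ⟨hR.trans hS.1, hS.2.mono hR⟩, fun hS => ⟨?_, ?_⟩⟩
    · exact fun x hx =>
        (hS {x} (Set.singleton_subset_iff.2 hx) (Set.finite_singleton x)).1 rfl
    · exact fun v l hc =>
        (hS {x | x ∈ v :: l} hc.1 (v :: l).finite_toSet).2 v l (hc.mono fun _ hx => hx)
  have hempty : (∅ : Set V) ∈ {S | S ⊆ H ∧ IsAcyclicOn A S} :=
    ⟨Set.empty_subset H, fun v l hc => hc.1 v List.mem_cons_self⟩
  obtain ⟨S, -, hS⟩ := hfin.exists_maximal hempty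
  exact ⟨S, hS⟩

end Acyclic

section AcyclicCover

variable {V : Type} {A : V → V → Prop} {S T : Set V} {a b c : ℕ}

/-- `T` is covered by `c` sets inducing acyclic subdigraphs, i.e. the subdigraph induced by `T` has
dichromatic number at most `c`. In contrast to `DicolorableOn`, no colour is asked of vertices
outside `T`, so that `∅` has an acyclic cover by `0` sets. -/
def HasAcyclicCover (A : V → V → Prop) (T : Set V) (c : ℕ) : Prop :=
  ∃ P : Fin c → Set V, T ⊆ ⋃ i, P i ∧ ∀ i, IsAcyclicOn A (P i)

theorem HasAcyclicCover.dicolorableOn (h : HasAcyclicCover A Set.univ c) :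
    DicolorableOn A Set.univ c := by
  obtain ⟨P, hcover, hP⟩ := h
  choose φ hφ using fun x => Set.mem_iUnion.1 (hcover (Set.mem_univ x))
  exact ⟨φ, fun v l hc hmono => hP (φ v) v l (hc.mono fun x hx => hmono x hx ▸ hφ x)⟩

theorem IsAcyclicOn.hasAcyclicCover (h : IsAcyclicOn A T) : HasAcyclicCover A T 1 :=
  ⟨fun _ => T, fun _ hx => Set.mem_iUnion.2 ⟨0, hx⟩, fun _ => h⟩

theorem hasAcyclicCover_empty (c : ℕ) : HasAcyclicCover A ∅ c :=
  ⟨fun _ => ∅, Set.empty_subset _, fun _ v _ hc => hc.1 v List.mem_cons_self⟩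

theorem HasAcyclicCover.mono (h : HasAcyclicCover A T c) (hST : S ⊆ T) : HasAcyclicCover A S c := by
  obtain ⟨P, hcover, hP⟩ := h
  exact ⟨P, hST.trans hcover, hP⟩

theorem HasAcyclicCover.union (hS : HasAcyclicCover A S a) (hT : HasAcyclicCover A T b) :
    HasAcyclicCover A (S ∪ T) (a + b) := by
  obtain ⟨P, hScover, hP⟩ := hS
  obtain ⟨Q, hTcover, hQ⟩ := hT
  refine ⟨Fin.append P Q, Set.union_subset (fun x hx => ?_) (fun x hx => ?_), fun i => ?_⟩
  · obtain ⟨i, hi⟩ := Set.mem_iUnion.1 (hScover hx)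
    exact Set.mem_iUnion.2 ⟨Fin.castAdd b i, by rwa [Fin.append_left]⟩
  · obtain ⟨i, hi⟩ := Set.mem_iUnion.1 (hTcover hx)
    exact Set.mem_iUnion.2 ⟨Fin.natAdd a i, by rwa [Fin.append_right]⟩
  · refine Fin.addCases (fun i => ?_) (fun i => ?_) i
    · rw [Fin.append_left]
      exact hP i
    · rw [Fin.append_right]
      exact hQ i

theorem HasAcyclicCover.mono_right (h : HasAcyclicCover A T a) (hab : a ≤ b) :
    HasAcyclicCover A T b := by
  simpa [Nat.add_sub_cancel' hab] using h.union (hasAcyclicCover_empty (b - a))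

theorem hasAcyclicCover_ncard (hirr : ∀ v, ¬ A v v) (hT : T.Finite) :
    HasAcyclicCover A T T.ncard := by
  have := hT.to_subtype
  let e : T ≃ Fin T.ncard := Finite.equivFin T
  refine ⟨fun i => {(e.symm i : V)}, fun x hx => ?_, fun i => isAcyclicOn_singleton hirr _⟩
  exact Set.mem_iUnion.2 ⟨e ⟨x, hx⟩, by simp⟩

/-- A directed cycle cannot leave a fibre of a monotone map, so one family of colours serves all
fibres. -/
theorem HasAcyclicCover.of_fibers {α : Type*} [PartialOrder α] {g : V → α}
    (hg : ∀ a ∈ T, ∀ b ∈ T, A a b → g a ≤ g b)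
    (h : ∀ i, HasAcyclicCover A {x ∈ T | g x = i} c) : HasAcyclicCover A T c := by
  choose P hcover hP using h
  refine ⟨fun j => {x ∈ T | x ∈ P (g x) j}, fun x hx => ?_, fun j v l hc => ?_⟩
  · obtain ⟨j, hj⟩ := Set.mem_iUnion.1 (hcover (g x) ⟨hx, rfl⟩)
    exact Set.mem_iUnion.2 ⟨j, hx, hj⟩
  · have hcT : IsCycleOn A T v l := hc.mono fun x hx => (hc.1 x hx).1
    refine hP (g v) j v l (hc.mono fun x hx => ?_)
    exact hcT.eq_of_monotone hg hx ▸ (hc.1 x hx).2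

theorem HasAcyclicCover.of_levels {d : V → ℤ}
    (hd : ∀ a ∈ T, ∀ b ∈ T, A a b → d b ≤ d a + 1)
    (h : ∀ i, HasAcyclicCover A {x ∈ T | d x = i} c) : HasAcyclicCover A T (2 * c) := by
  have parity : ∀ r, HasAcyclicCover A {x ∈ T | d x % 2 = r} c := by
    intro r
    refine .of_fibers (g := fun x => -d x) (fun x hx y hy hxy => ?_) fun i =>
      (h (-i)).mono fun x hx => ⟨hx.1.1, ?_⟩
    · have hstep := hd x hx.1 y hy.1 hxy
      have hmod : d x % 2 = d y % 2 := hx.2.trans hy.2.symm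
      omega
    · rw [← hx.2, neg_neg]
  rw [two_mul]
  refine ((parity 0).union (parity 1)).mono fun x hx => ?_
  exact (Int.emod_two_eq_zero_or_one (d x)).imp (fun h => ⟨hx, h⟩) (fun h => ⟨hx, h⟩)

theorem exists_injective_of_forall_hasAcyclicCover {W : Type*} [Finite W] (hirr : ∀ v, ¬ A v v)
    (hT : ∀ c, HasAcyclicCover A T c → Nat.card W ≤ c) :
    ∃ f : W → V, Function.Injective f ∧ ∀ w, f w ∈ T := by
  suffices Nonempty (W ↪ T) by
    obtain ⟨f⟩ := this
    exact ⟨fun w => f w, Subtype.val_injective.comp f.injective, fun w => (f w).2⟩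
  rcases T.finite_or_infinite with hfin | hinf
  · have := hfin.to_subtype
    have := Fintype.ofFinite W
    have := Fintype.ofFinite T
    refine Function.Embedding.nonempty_of_card_le ?_
    rw [← Nat.card_eq_fintype_card, ← Nat.card_eq_fintype_card]
    exact hT T.ncard (hasAcyclicCover_ncard hirr hfin)
  · have := hinf.to_subtype
    exact ⟨(Finite.equivFin W).toEmbedding.trans
      (Fin.valEmbedding.trans (Infinite.natEmbedding T))⟩

end AcyclicCover

section Path

variable {V : Type} {A : V → V → Prop} {u v w : V} {p q : List V}

/-- `q` is the list of internal vertices of a directed path from `u` to `v`, where `u ≠ v`. -/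
def IsPath (A : V → V → Prop) (u : V) (q : List V) (v : V) : Prop :=
  (u :: (q ++ [v])).IsChain A ∧ (u :: (q ++ [v])).Nodup

theorem IsPath.ne_of_mem {x : V} (h : IsPath A u q v) (hx : x ∈ q) : x ≠ v := by
  rintro rfl
  exact List.disjoint_of_nodup_append (List.nodup_cons.1 h.2).2 hx (List.mem_singleton_self x)

theorem IsPath.append (hp : IsPath A u p w) (hq : IsPath A w q v)
    (hdisj : (u :: p).Disjoint (q ++ [v])) : IsPath A u (p ++ w :: q) v := by
  have hp' : ((u :: p) ++ [w]).Nodup := hp.2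
  constructor
  · simpa using List.isChain_cons_split.2 ⟨hp.1, hq.1⟩
  · suffices ((u :: p) ++ (w :: (q ++ [v]))).Nodup by simpa using this
    refine List.nodup_append'.2 ⟨hp'.of_append_left, hq.2, List.disjoint_cons_right.2 ⟨?_, hdisj⟩⟩
    exact fun hw => List.disjoint_of_nodup_append hp' hw (List.mem_singleton_self w)

theorem IsPath.exists_suffix (h : IsPath A u q v) (hw : w ∈ u :: q) :
    ∃ p, IsPath A w p v ∧ p ⊆ q := by
  obtain ⟨s, t, hst⟩ := List.append_of_mem hw
  have hlist : u :: (q ++ [v]) = s ++ (w :: (t ++ [v])) := by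
    rw [← List.cons_append, hst, List.append_assoc, List.cons_append]
  refine ⟨t, ⟨(hlist ▸ h.1).right_of_append, (hlist ▸ h.2).of_append_right⟩, ?_⟩
  rcases List.cons_eq_append_iff.1 hst with ⟨-, hq⟩ | ⟨s', -, rfl⟩
  · exact (List.cons.inj hq).2 ▸ List.Subset.refl _
  · exact fun x hx => List.mem_append_right _ (List.mem_cons_of_mem _ hx)

theorem exists_isPath_of_reflTransGen {Q : V → Prop}
    (h : Relation.ReflTransGen (fun a b => A a b ∧ Q b) u v) (huv : u ≠ v) :
    ∃ q, IsPath A u q v ∧ ∀ x ∈ q, Q x := by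
  induction h using Relation.ReflTransGen.head_induction_on with
  | refl => exact absurd rfl huv
  | @head a b hab _ ih =>
    by_cases hbv : b = v
    · subst hbv
      exact ⟨[], ⟨List.isChain_pair.2 hab.1, by simpa using huv⟩, by simp⟩
    obtain ⟨q, hq, hqQ⟩ := ih hbv
    by_cases ha : a ∈ b :: q
    · obtain ⟨p, hp, hpq⟩ := hq.exists_suffix ha
      exact ⟨p, hp, fun x hx => hqQ x (hpq hx)⟩
    · refine ⟨b :: q, ⟨List.isChain_cons_cons.2 ⟨hab.1, hq.1⟩, List.nodup_cons.2 ⟨?_, hq.2⟩⟩,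
        List.forall_mem_cons.2 ⟨hab.2, hqQ⟩⟩
      rw [List.cons_append, ← List.cons_append, List.mem_append, List.mem_singleton]
      exact not_or.2 ⟨ha, huv⟩

theorem IsCycleOn.exists_isPath {S : Set V} {l : List V} (h : IsCycleOn A S u l)
    (hirr : ∀ v, ¬ A v v) : ∃ p w, l = p ++ [w] ∧ IsPath A u p w := by
  rcases List.eq_nil_or_concat' l with rfl | ⟨p, w, rfl⟩
  · exact absurd (List.isChain_pair.1 h.2.2) (hirr u)
  · exact ⟨p, w, rfl, List.IsChain.left_of_append (l₂ := [u]) h.2.2, h.2.1⟩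

end Path

section Distance

open Relation

variable {V : Type} {E : V → V → Prop} {x u v : V}

/-- `WalkOfLength E x n v`: there is a directed walk with `n` arcs from `x` to `v`. -/
def WalkOfLength (E : V → V → Prop) (x : V) : ℕ → V → Prop
  | 0, v => v = x
  | n + 1, v => ∃ u, WalkOfLength E x n u ∧ E u v

/-- The distance from `x` to `v`, with junk value `0` if `v` cannot be reached from `x`. -/
noncomputable def directedDist (E : V → V → Prop) (x v : V) : ℕ :=
  sInf {n | WalkOfLength E x n v}

theorem directedDist_le {n : ℕ} (h : WalkOfLength E x n v) : directedDist E x v ≤ n :=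
  Nat.sInf_le h

theorem WalkOfLength.reflTransGen {n : ℕ} (h : WalkOfLength E x n v) : ReflTransGen E x v := by
  induction n generalizing v with
  | zero => exact (show v = x from h) ▸ .refl
  | succ n ih =>
    obtain ⟨u, hu, huv⟩ := h
    exact (ih hu).tail huv

theorem walkOfLength_directedDist (h : ReflTransGen E x v) :
    WalkOfLength E x (directedDist E x v) v := by
  refine Nat.sInf_mem (s := {n | WalkOfLength E x n v}) ?_
  induction h with
  | refl => exact ⟨0, rfl⟩
  | tail _ huv ih =>
    obtain ⟨n, hn⟩ := ih
    exact ⟨n + 1, _, hn, huv⟩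

theorem directedDist_le_add_one (hu : ReflTransGen E x u) (huv : E u v) :
    directedDist E x v ≤ directedDist E x u + 1 :=
  directedDist_le ⟨u, walkOfLength_directedDist hu, huv⟩

theorem reflTransGen_directedDist_lt (h : ReflTransGen E x v) :
    ReflTransGen (fun a b => E a b ∧ directedDist E x a < directedDist E x v ∧
      (directedDist E x b < directedDist E x v ∨ b = v)) x v := by
  obtain ⟨n, hn⟩ : ∃ n, directedDist E x v = n := ⟨_, rfl⟩
  induction n generalizing v with
  | zero =>
    have hwalk := walkOfLength_directedDist h
    rw [hn] at hwalk
    exact (show v = x from hwalk) ▸ .refl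
  | succ n ih =>
    have hwalk := walkOfLength_directedDist h
    rw [hn] at hwalk
    obtain ⟨u, hu, huv⟩ := hwalk
    have hun : directedDist E x u = n := by
      have := directedDist_le_add_one hu.reflTransGen huv
      have := directedDist_le hu
      omega
    rw [hn]
    refine .tail (ReflTransGen.mono (fun a b hab => ?_) _ _ (ih hu.reflTransGen hun))
      ⟨huv, by omega, .inr rfl⟩
    refine ⟨hab.1, by omega, .inl ?_⟩
    rcases hab.2.2 with hb | rfl <;> omega

end Distance

section Linked

open Relation Function

variable {V : Type} {A : V → V → Prop} {T : Set V} {k c : ℕ}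

/-- The arcs of the subdigraph induced by `T`. -/
def InducedArc (A : V → V → Prop) (T : Set V) (a b : V) : Prop :=
  A a b ∧ a ∈ T ∧ b ∈ T

/-- Any vertex of `H` can be joined to any other by a directed path with at least `r` internal
vertices, all of them in `T` but outside `H`. -/
def IsLinkedIn (A : V → V → Prop) (T : Set V) (r : ℕ) (H : Set V) : Prop :=
  H.Pairwise fun u v => ∃ q, IsPath A u q v ∧ (∀ x ∈ q, x ∈ T \ H) ∧ r ≤ q.length

/-- The strong components are the fibres of the map sending a vertex to the set of vertices it
reaches, and this set shrinks along arcs. -/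
theorem exists_strongComponent_not_hasAcyclicCover (h : ¬ HasAcyclicCover A T c) :
    ∃ C ⊆ T, ¬ HasAcyclicCover A C c ∧
      ∀ u ∈ C, ∀ v ∈ C, ReflTransGen (InducedArc A T) u v := by
  let reach (x : V) : (Set V)ᵒᵈ := OrderDual.toDual {y | ReflTransGen (InducedArc A T) x y}
  have hreach : ∀ a ∈ T, ∀ b ∈ T, A a b → reach a ≤ reach b :=
    fun a ha b hb hab y hy => ReflTransGen.head ⟨hab, ha, hb⟩ hy
  obtain ⟨R, hR⟩ := not_forall.1 fun hall => h (.of_fibers hreach hall)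
  refine ⟨{x ∈ T | reach x = R}, Set.sep_subset _ _, hR, fun u hu v hv => ?_⟩
  have hvv : v ∈ OrderDual.ofDual (reach v) := ReflTransGen.refl
  rwa [show reach v = reach u from hv.2.trans hu.2.symm] at hvv

theorem isLinkedIn_of_directedDist_eq {H : Set V} {x : V}
    (hout : ∀ v ∈ H, ReflTransGen (InducedArc A T) x v)
    (hin : ∀ u ∈ H, ReflTransGen (InducedArc A T) u x)
    (heq : ∀ a ∈ H, ∀ b ∈ H,
      directedDist (InducedArc A T) x a = directedDist (InducedArc A T) x b)
    (heq' : ∀ a ∈ H, ∀ b ∈ H,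
      directedDist (swap (InducedArc A T)) x a = directedDist (swap (InducedArc A T)) x b) :
    IsLinkedIn A T 0 H := by
  intro u hu v hv huv
  have hux : ReflTransGen (fun a b => A a b ∧ b ∈ T ∧ (b ∉ H ∨ b = v)) u x := by
    refine reflTransGen_swap.1 (ReflTransGen.mono (fun b a hab => ?_) _ _
      (reflTransGen_directedDist_lt (reflTransGen_swap.2 (hin u hu))))
    have hb : b ∉ H := fun hb => hab.2.1.ne (heq' b hb u hu)
    exact ⟨hab.1.1, hab.1.2.2, .inl hb⟩
  have hxv : ReflTransGen (fun a b => A a b ∧ b ∈ T ∧ (b ∉ H ∨ b = v)) x v := by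
    refine ReflTransGen.mono (fun a b hab => ?_) _ _ (reflTransGen_directedDist_lt (hout v hv))
    have hb : directedDist (InducedArc A T) x b < directedDist (InducedArc A T) x v → b ∉ H :=
      fun hlt hb => hlt.ne (heq b hb v hv)
    exact ⟨hab.1.1, hab.1.2.2, hab.2.2.imp_left hb⟩
  obtain ⟨q, hq, hqH⟩ := exists_isPath_of_reflTransGen (hux.trans hxv) huv
  exact ⟨q, hq, fun y hy => ⟨(hqH y hy).1, (hqH y hy).2.resolve_right (hq.ne_of_mem hy)⟩,
    Nat.zero_le _⟩

theorem exists_isLinkedIn (h : ¬ HasAcyclicCover A T (4 * c)) :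
    ∃ H ⊆ T, ¬ HasAcyclicCover A H c ∧ IsLinkedIn A T 0 H := by
  obtain ⟨C, hCT, hC, hconn⟩ := exists_strongComponent_not_hasAcyclicCover h
  obtain ⟨x, hx⟩ : C.Nonempty := by
    rw [Set.nonempty_iff_ne_empty]
    rintro rfl
    exact hC (hasAcyclicCover_empty _)
  let E := InducedArc A T
  have hdist : ∀ a ∈ C, ∀ b ∈ C, A a b → (directedDist E x b : ℤ) ≤ directedDist E x a + 1 :=
    fun a ha b hb hab => mod_cast directedDist_le_add_one (hconn x hx a ha)
      (show E a b from ⟨hab, hCT ha, hCT hb⟩)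
  have hdist' : ∀ a ∈ C, ∀ b ∈ C, A a b →
      (directedDist (swap E) x a : ℤ) ≤ directedDist (swap E) x b + 1 :=
    fun a ha b hb hab => mod_cast directedDist_le_add_one (reflTransGen_swap.2 (hconn b hb x hx))
      (show swap E b a from ⟨hab, hCT ha, hCT hb⟩)
  obtain ⟨i, hi⟩ : ∃ i : ℤ, ¬ HasAcyclicCover A {y ∈ C | (directedDist E x y : ℤ) = i} (2 * c) := by
    by_contra! hall
    exact hC ((HasAcyclicCover.of_levels hdist hall).mono_right (by omega))
  set L := {y ∈ C | (directedDist E x y : ℤ) = i}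
  obtain ⟨j, hj⟩ : ∃ j : ℤ,
      ¬ HasAcyclicCover A {y ∈ L | -(directedDist (swap E) x y : ℤ) = j} c := by
    by_contra! hall
    refine hi (HasAcyclicCover.of_levels (fun a ha b hb hab => ?_) hall)
    have := hdist' a ha.1 b hb.1 hab
    omega
  exact ⟨_, fun y hy => hCT hy.1.1, hj, isLinkedIn_of_directedDist_eq
    (fun v hv => hconn x hx v hv.1.1) (fun u hu => hconn u hu.1.1 x hx)
    (fun a ha b hb => Nat.cast_injective (ha.1.2.trans hb.1.2.symm))
    (fun a ha b hb => Nat.cast_injective (neg_injective (ha.2.trans hb.2.symm)))⟩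

theorem IsAcyclicOn.exists_long_isPath (hirr : ∀ v, ¬ A v v)
    (hgirth : ∀ v l, IsCycleOn A Set.univ v l → k ≤ (v :: l).length) {S : Set V} {u : V}
    (hS : IsAcyclicOn A S) (hu : ¬ IsAcyclicOn A (insert u S)) :
    ∃ w ∈ S, ∃ p, IsPath A u p w ∧ (∀ x ∈ p, x ∈ S) ∧ k ≤ p.length + 2 := by
  obtain ⟨l, hl, hlS⟩ := hS.exists_cycle_of_insert hu
  obtain ⟨p, w, rfl, hp⟩ := hl.exists_isPath hirr
  have hk := hgirth u _ (hl.mono fun _ _ => Set.mem_univ _)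
  exact ⟨w, hlS w (by simp), p, hp, fun x hx => hlS x (by simp [hx]), by simpa using hk⟩

theorem exists_isLinkedIn_of_digirth (hirr : ∀ v, ¬ A v v)
    (hgirth : ∀ v l, IsCycleOn A Set.univ v l → k ≤ (v :: l).length) {N : ℕ}
    (h : ¬ HasAcyclicCover A T (4 * N)) :
    ∃ H ⊆ T, (∀ c, HasAcyclicCover A H c → N ≤ c) ∧ IsLinkedIn A T (k - 1) H := by
  obtain ⟨H, hHT, hH, hlink⟩ := exists_isLinkedIn h
  obtain ⟨S, hS⟩ := exists_maximal_isAcyclicOn A H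
  obtain ⟨hSH, hSac⟩ := hS.prop
  refine ⟨H \ S, Set.sdiff_subset.trans hHT, fun c hc => ?_, fun u hu v hv huv => ?_⟩
  · by_contra! hcN
    refine hH (((hc.union hSac.hasAcyclicCover).mono ?_).mono_right hcN)
    rw [Set.sdiff_union_of_subset hSH]
  have huS : ¬ IsAcyclicOn A (insert u S) := fun hac =>
    hu.2 (hS.le_of_ge ⟨Set.insert_subset hu.1 hSH, hac⟩ (Set.subset_insert u S)
      (Set.mem_insert u S))
  obtain ⟨w, hwS, p, hp, hpS, hpk⟩ := hSac.exists_long_isPath hirr hgirth huS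
  obtain ⟨q, hq, hqH, -⟩ := hlink (hSH hwS) hv.1 fun hwv => hv.2 (hwv ▸ hwS)
  have hdisj : (u :: p).Disjoint (q ++ [v]) := by
    refine List.disjoint_append_right.2
      ⟨List.disjoint_cons_left.2 ⟨fun huq => (hqH u huq).2 hu.1, fun x hxp hxq =>
        (hqH x hxq).2 (hSH (hpS x hxp))⟩, List.disjoint_singleton.2 fun hvp => ?_⟩
    rcases List.mem_cons.1 hvp with hvu | hvp
    exacts [huv hvu.symm, hv.2 (hpS v hvp)]
  refine ⟨p ++ w :: q, hp.append hq hdisj, fun x hx => ?_, ?_⟩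
  · have hST : ∀ x ∈ S, x ∈ T \ (H \ S) := fun x hx => ⟨hHT (hSH hx), fun h => h.2 hx⟩
    rcases List.mem_append.1 hx with hx | hx
    · exact hST x (hpS x hx)
    rcases List.mem_cons.1 hx with rfl | hx
    · exact hST x hwS
    · exact ⟨(hqH x hx).1, fun h => (hqH x hx).2 h.1⟩
  · rw [List.length_append, List.length_cons]
    omega

end Linked

section Subdivision

variable {V W : Type} {A : V → V → Prop} {T H : Set V} {r k : ℕ} {F : Set (W × W)} {f : W → V}
  {p : W × W → List V}

/-- The branch vertices `f w` and the paths with internal vertices `p e` form, inside `T`, a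
subdivision of the digraph on `W` with arc set `F`, each arc being subdivided at least `r` times. -/
structure IsSubdivisionIn (A : V → V → Prop) (T : Set V) (r : ℕ) (F : Set (W × W)) (f : W → V)
    (p : W × W → List V) : Prop where
  injective : Function.Injective f
  branch_mem : ∀ w, f w ∈ T
  isPath : ∀ e ∈ F, IsPath A (f e.1) (p e) (f e.2)
  internal_mem : ∀ e ∈ F, ∀ x ∈ p e, x ∈ T
  internal_ne : ∀ e ∈ F, ∀ x ∈ p e, ∀ w, x ≠ f w
  disjoint : F.Pairwise fun e e' => (p e).Disjoint (p e')
  le_length : ∀ e ∈ F, r ≤ (p e).length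

theorem IsSubdivisionIn.containsSubdivisionGE {B : W → W → Prop} {s : W → W → ℕ}
    (h : IsSubdivisionIn A T r {e | B e.1 e.2} f p) (hs : ∀ u v, B u v → s u v ≤ r) :
    ContainsSubdivisionGE B s A :=
  ⟨f, fun u v => p (u, v), h.injective, fun u v huv => (h.isPath (u, v) huv).1,
    fun u v huv => (h.isPath (u, v) huv).2, fun u v huv => h.internal_ne (u, v) huv,
    fun u v u' v' huv huv' hne _ hx hx' =>
      h.disjoint (x := (u, v)) huv (y := (u', v')) huv' hne hx hx',
    fun u v huv => (hs u v huv).trans (h.le_length (u, v) huv)⟩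

theorem IsSubdivisionIn.exists_insert (h : IsSubdivisionIn A H r F f p) (hHT : H ⊆ T)
    (hlink : IsLinkedIn A T r H) {e : W × W} (he : e ∉ F) (hloop : e.1 ≠ e.2) :
    ∃ p', IsSubdivisionIn A T r (insert e F) f p' := by
  classical
  obtain ⟨q, hq, hqH, hqr⟩ :=
    hlink (h.branch_mem e.1) (h.branch_mem e.2) (h.injective.ne hloop)
  have hold : ∀ e' ∈ F, Function.update p e q e' = p e' := fun e' he' =>
    Function.update_of_ne (ne_of_mem_of_not_mem he' he) _ _
  have extend : ∀ {P : W × W → List V → Prop}, P e q → (∀ e' ∈ F, P e' (p e')) →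
      ∀ e' ∈ insert e F, P e' (Function.update p e q e') := by
    intro P hP hPF
    refine Set.forall_mem_insert.2 ⟨by rwa [Function.update_self], fun e' he' => ?_⟩
    rw [hold e' he']
    exact hPF e' he'
  refine ⟨Function.update p e q, h.injective, fun w => hHT (h.branch_mem w),
    extend (P := fun e' l => IsPath A (f e'.1) l (f e'.2)) hq h.isPath,
    extend (P := fun _ l => ∀ x ∈ l, x ∈ T) (fun x hx => (hqH x hx).1)
      fun e' he' x hx => hHT (h.internal_mem e' he' x hx),
    extend (P := fun _ l => ∀ x ∈ l, ∀ w, x ≠ f w)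
      (fun x hx w hxw => (hqH x hx).2 (hxw ▸ h.branch_mem w)) h.internal_ne, ?_,
    extend (P := fun _ l => r ≤ l.length) hqr h.le_length⟩
  have : Std.Symm fun e₁ e₂ => (Function.update p e q e₁).Disjoint (Function.update p e q e₂) :=
    ⟨fun _ _ hd => hd.symm⟩
  refine Set.pairwise_insert_of_symm.2 ⟨fun e₁ he₁ e₂ he₂ hne => ?_,
    fun e' he' _ => ?_⟩
  · simp only [hold e₁ he₁, hold e₂ he₂]
    exact h.disjoint he₁ he₂ hne
  · simp only [Function.update_self, hold e' he']
    exact fun x hx hx' => (hqH x hx).2 (h.internal_mem e' he' x hx')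

theorem four_pow_mul_add_succ (n m : ℕ) :
    4 ^ (m + 1) * n + (4 ^ (m + 1) - 1) / 3 = 4 * (4 ^ m * n + (4 ^ m - 1) / 3) + 1 := by
  have hmod : 4 ^ m % 3 = 1 := by simp [Nat.pow_mod]
  rw [pow_succ', mul_assoc]
  omega

theorem four_pow_mul_add_le {n : ℕ} (hn : 1 ≤ n) (m : ℕ) :
    4 ^ m * n + (4 ^ m - 1) / 3 ≤ (4 ^ (m + 1) * n - 1) / 3 := by
  have hpos : 1 ≤ 4 ^ m := Nat.one_le_pow' m 3
  have hle : 4 ^ m ≤ 4 ^ m * n := Nat.le_mul_of_pos_right _ hn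
  rw [pow_succ', mul_assoc]
  omega

theorem exists_isSubdivisionIn [Finite W] (hirr : ∀ v, ¬ A v v)
    (hgirth : ∀ v l, IsCycleOn A Set.univ v l → k ≤ (v :: l).length)
    (hF : ∀ e ∈ F, e.1 ≠ e.2)
    (hT : ∀ c, HasAcyclicCover A T c → 4 ^ F.ncard * Nat.card W + (4 ^ F.ncard - 1) / 3 ≤ c) :
    ∃ f p, IsSubdivisionIn A T (k - 1) F f p := by
  induction F, F.toFinite using Set.Finite.induction_on generalizing T with
  | empty =>
    obtain ⟨f, hf, hfT⟩ := exists_injective_of_forall_hasAcyclicCover (W := W) hirr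
      (by simpa using hT)
    exact ⟨f, fun _ => [], hf, hfT, by simp, by simp, by simp, by simp, by simp⟩
  | @insert e F he hFfin ih =>
    rw [Set.ncard_insert_of_notMem he hFfin, four_pow_mul_add_succ] at hT
    obtain ⟨H, hHT, hH, hlink⟩ := exists_isLinkedIn_of_digirth hirr hgirth
      fun hcover => (hT _ hcover).not_gt (Nat.lt_succ_self _)
    obtain ⟨f, p, hfp⟩ := ih (fun e' he' => hF e' (Set.mem_insert_of_mem e he')) hH
    obtain ⟨p', hp'⟩ := hfp.exists_insert hHT hlink he (hF e (Set.mem_insert e F))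
    exact ⟨f, p', hp'⟩

end Subdivision

theorem stmt7_general {W V : Type} [Finite W] {k : ℕ} {B : W → W → Prop} (hirrB : ∀ v, ¬ B v v)
    {s : W → W → ℕ} (hs : ∀ u v, B u v → s u v ≤ k - 1) {A : V → V → Prop} (hirr : ∀ v, ¬ A v v)
    (hgirth : ∀ v l, IsCycleOn A Set.univ v l → k ≤ (v :: l).length)
    (hchi : ∀ c, DicolorableOn A Set.univ c →
      4 ^ Nat.card {q : W × W // B q.1 q.2} * Nat.card W +
        (4 ^ Nat.card {q : W × W // B q.1 q.2} - 1) / 3 ≤ c) :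
    ContainsSubdivisionGE B s A := by
  have hloop : ∀ e ∈ {e : W × W | B e.1 e.2}, e.1 ≠ e.2 := by
    rintro ⟨u, v⟩ huv (rfl : u = v)
    exact hirrB u huv
  obtain ⟨f, p, hfp⟩ := exists_isSubdivisionIn hirr hgirth hloop
    fun c hc => hchi c hc.dicolorableOn
  exact hfp.containsSubdivisionGE hs

/-- Let `k ≥ 1` and let `F` be a nonempty digraph (on `Fin nF`, with `m` arcs). If `F*`
is obtained from `F` by subdividing every arc at most `k-1` times (arc `(u,v)` being
subdivided `s u v ≤ k-1` times), then every digraph `D` with digirth at least `k` (every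
directed cycle has at least `k` vertices) and dichromatic number at least
`(4^{m+1}·nF − 1)/3` contains a subdivision of `F*`. -/
theorem stmt7 (k nF : ℕ) (hk : 1 ≤ k) (hF : 1 ≤ nF)
    (BF : Fin nF → Fin nF → Prop) (hirrF : ∀ v, ¬ BF v v)
    (s : Fin nF → Fin nF → ℕ) (hs : ∀ u v, BF u v → s u v ≤ k - 1)
    {V : Type} [Fintype V] (A : V → V → Prop) (hirr : ∀ v, ¬ A v v)
    (hgirth : ∀ v l, IsCycleOn A Set.univ v l → k ≤ (v :: l).length)
    (hchi : (4 ^ (Nat.card {q : Fin nF × Fin nF // BF q.1 q.2} + 1) * nF - 1) / 3 ≤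
      dichromaticNumber A) :
    ContainsSubdivisionGE BF s A :=
  stmt7_general hirrF hs hirr hgirth fun c hc => by
    simpa using (four_pow_mul_add_le hF _).trans (hchi.trans (Nat.sInf_le hc))
end

section
/- Let k ≥ 1 and let T be a bidirected tree. If T* is obtained from T by subdividing every arc at most k−1 times, then every digraph D with digirth at least 2k and dichromatic number at least n(T) contains a subdivision of T*. -/
/-!
Induct on the number `m + 1` of vertices of the tree, inside a vertex set `U` that is not covered by
`m` acyclic sets. For `m ≥ 1` take a maximal acyclic `X ⊆ U`. Then `U \ X` is not covered by `m - 1`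
acyclic sets, so it hosts a subdivision of the tree minus a leaf `x`. If `v` is the image of the
neighbour of `x`, then `X ∪ {v}` contains a directed cycle through `v` by maximality, and this cycle
meets `U \ X` only in `v`. As it is long, a suitable vertex of it can serve as the image of `x`, the
two parts of the cycle between this vertex and `v` replacing the two new arcs. By the
Teichmüller–Tukey lemma `X` exists even if `A` is infinite.
-/

/-- The vertex set `X` is acyclic in `A`: it induces a digraph without directed cycles. -/
def AcyclicOn {V : Type} (A : V → V → Prop) (X : Set V) : Prop :=
  ∀ v l, ¬ IsCycleOn A X v l

/-- `U` is covered by `m` vertex sets inducing acyclic digraphs, that is, `A[U]` has dichromatic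
number at most `m`. Unlike `DicolorableOn A U m`, whose colourings are defined on all of `V`, this
holds for `U = ∅` and `m = 0` even if `V` is nonempty. -/
def AcyclicCoverable {V : Type} (A : V → V → Prop) (U : Set V) (m : ℕ) : Prop :=
  ∃ X : Fin m → Set V, (∀ i, AcyclicOn A (X i)) ∧ U ⊆ ⋃ i, X i

/-- `f` and `p` describe a subdivision of `B` in `A` as in `ContainsSubdivisionGE`, all of whose
vertices lie in `U`. Confining the subdivision to `U` leaves the vertices outside `U` free for
extending it. -/
structure IsSubdivisionIn_s8 {W V : Type} (B : W → W → Prop) (s : W → W → ℕ) (A : V → V → Prop)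
    (U : Set V) (f : W → V) (p : W → W → List V) : Prop where
  injective : Function.Injective f
  mem : ∀ w, f w ∈ U
  chain : ∀ u v, B u v → List.IsChain A (f u :: (p u v ++ [f v]))
  nodup : ∀ u v, B u v → (f u :: (p u v ++ [f v])).Nodup
  path_mem : ∀ u v, B u v → ∀ x ∈ p u v, x ∈ U
  path_ne : ∀ u v, B u v → ∀ x ∈ p u v, ∀ w, x ≠ f w
  disjoint : ∀ u v u' v', B u v → B u' v' → (u, v) ≠ (u', v') → ∀ x ∈ p u v, x ∉ p u' v'
  le_length : ∀ u v, B u v → s u v ≤ (p u v).length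

/-- The family of paths obtained from `p` when a pendant vertex `none` is added: `P` leads to `none`
and `Q` leads back. -/
def pendantPath {W V : Type} (p : W → W → List V) (P Q : List V) : Option W → Option W → List V
  | some a, some b => p a b
  | some _, none => P
  | none, _ => Q

section Cycle

variable {V : Type} {A : V → V → Prop} {X Y U : Set V} {v w : V} {l : List V} {m : ℕ}

theorem IsCycleOn.mono_s8 (h : IsCycleOn A X v l) (hXY : X ⊆ Y) : IsCycleOn A Y v l :=
  ⟨fun x hx => hXY (h.1 x hx), h.2⟩

theorem IsCycleOn.of_insert (h : IsCycleOn A (insert w X) v l) (hw : w ∉ v :: l) :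
    IsCycleOn A X v l :=
  ⟨fun x hx => (h.1 x hx).resolve_left fun hxw => hw (hxw ▸ hx), h.2⟩

theorem IsCycleOn.exists_rotate (h : IsCycleOn A X w l) (hv : v ∈ w :: l) :
    ∃ l', IsCycleOn A X v l' := by
  obtain ⟨a, b, hab⟩ := List.append_of_mem hv
  have hrot : (w :: l) ~r (v :: (b ++ a)) := hab ▸ List.isRotated_append
  obtain ⟨hX, hnodup, hchain⟩ := h
  have hcycle : Cycle.Chain A (w :: l : List V) := hchain
  rw [Cycle.coe_eq_coe.2 hrot] at hcycle
  exact ⟨b ++ a, fun x hx => hX x (hrot.mem_iff.2 hx), hrot.nodup_iff.1 hnodup, hcycle⟩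

theorem IsCycleOn.mem_of_insert (h : IsCycleOn A (insert v X) v l) {x : V} (hx : x ∈ l) : x ∈ X :=
  (h.1 x (List.mem_cons_of_mem v hx)).resolve_left fun hxv =>
    (List.nodup_cons.1 h.2.1).1 (hxv ▸ hx)

theorem IsCycleOn.isChain_of_append_cons {P Q : List V} {u : V}
    (h : IsCycleOn A X v (P ++ u :: Q)) :
    List.IsChain A (v :: (P ++ [u])) ∧ List.IsChain A (u :: (Q ++ [v])) := by
  have hchain : List.IsChain A (v :: (P ++ u :: Q ++ [v])) := h.2.2
  rw [List.append_assoc] at hchain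
  exact List.isChain_cons_split.1 hchain

theorem AcyclicOn.exists_isCycleOn_of_insert (hX : AcyclicOn A X)
    (hv : ¬ AcyclicOn A (insert v X)) : ∃ l, IsCycleOn A (insert v X) v l := by
  simp only [AcyclicOn, not_forall, not_not] at hv
  obtain ⟨w, l, hwl⟩ := hv
  exact hwl.exists_rotate (by_contra fun hvl => hX w l (hwl.of_insert hvl))

theorem isOfFiniteCharacter_acyclicOn (A : V → V → Prop) (U : Set V) :
    Order.IsOfFiniteCharacter {X | X ⊆ U ∧ AcyclicOn A X} := by
  refine fun X => ⟨fun hX Y hYX _ => ⟨hYX.trans hX.1, fun v l h => hX.2 v l (h.mono_s8 hYX)⟩,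
    fun hX => ⟨fun v hv => ?_, fun v l h => ?_⟩⟩
  · exact (hX {v} (Set.singleton_subset_iff.2 hv) (Set.finite_singleton v)).1 rfl
  · exact (hX {x | x ∈ v :: l} h.1 (List.finite_toSet _)).2 v l ⟨fun _ hx => hx, h.2⟩

theorem exists_acyclicOn_forall_exists_isCycleOn (A : V → V → Prop) (U : Set V) :
    ∃ X ⊆ U, AcyclicOn A X ∧ ∀ v ∈ U \ X, ∃ l, IsCycleOn A (insert v X) v l := by
  have hempty : ∅ ∈ {X | X ⊆ U ∧ AcyclicOn A X} :=
    ⟨Set.empty_subset U, fun v _ h => h.1 v List.mem_cons_self⟩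
  obtain ⟨X, -, ⟨hXU, hX⟩, hmax⟩ := (isOfFiniteCharacter_acyclicOn A U).exists_maximal hempty
  refine ⟨X, hXU, hX, fun v hv => hX.exists_isCycleOn_of_insert fun hins => hv.2 ?_⟩
  exact hmax ⟨Set.insert_subset hv.1 hXU, hins⟩ (Set.subset_insert v X) (Set.mem_insert v X)

theorem AcyclicCoverable.succ_of_diff (hX : AcyclicOn A X) (hU : AcyclicCoverable A (U \ X) m) :
    AcyclicCoverable A U (m + 1) := by
  obtain ⟨Y, hY, hcover⟩ := hU
  refine ⟨Fin.cons X Y, Fin.cases hX hY, fun v hv => ?_⟩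
  rw [Set.mem_iUnion, Fin.exists_fin_succ]
  by_cases hvX : v ∈ X
  · exact .inl hvX
  · exact .inr (Set.mem_iUnion.1 (hcover ⟨hv, hvX⟩))

theorem nonempty_of_not_acyclicCoverable (hU : ¬ AcyclicCoverable A U m) : U.Nonempty := by
  rw [Set.nonempty_iff_ne_empty]
  rintro rfl
  exact hU ⟨fun _ => ∅, fun _ v _ h => h.1 v List.mem_cons_self, Set.empty_subset _⟩

theorem AcyclicCoverable.dicolorableOn_univ (h : AcyclicCoverable A Set.univ m) :
    DicolorableOn A Set.univ m := by
  obtain ⟨X, hX, hcover⟩ := h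
  choose φ hφ using fun v => Set.mem_iUnion.1 (hcover (Set.mem_univ v))
  exact ⟨φ, fun v l h hmono => hX (φ v) v l ⟨fun x hx => hmono x hx ▸ hφ x, h.2⟩⟩

end Cycle

theorem exists_eq_append_cons_of_add_lt_length {α : Type*} {l : List α} {a b : ℕ}
    (h : a + b < l.length) : ∃ P u Q, l = P ++ u :: Q ∧ a ≤ P.length ∧ b ≤ Q.length := by
  have ha : a < l.length := by omega
  refine ⟨l.take a, l[a], l.drop (a + 1), ?_, ?_, ?_⟩
  · rw [← List.drop_eq_getElem_cons ha, List.take_append_drop]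
  · rw [List.length_take]; omega
  · rw [List.length_drop]; omega

theorem exists_leaf_isTree_induce_compl {W : Type*} [Finite W] [Nontrivial W] {G : SimpleGraph W}
    (hG : G.IsTree) : ∃ x y, (∀ z, G.Adj x z ↔ z = y) ∧ (G.induce {x}ᶜ).IsTree := by
  classical
  have := Fintype.ofFinite W
  obtain ⟨x, hx⟩ := hG.exists_vert_degree_one_of_nontrivial
  obtain ⟨y, hxy, hy⟩ := SimpleGraph.degree_eq_one_iff_existsUnique_adj.1 hx
  exact ⟨x, y, fun z => ⟨hy z, fun hz => hz ▸ hxy⟩,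
    hG.connected.induce_compl_singleton_of_degree_eq_one hx, hG.isAcyclic.induce _⟩

theorem forall_arc_of_pendant {W : Type*} {B R : Option W → Option W → Prop} {y : W}
    (hout : ∀ z, B none z → z = some y) (hin : ∀ z, B z none → z = some y) (hRout : R none (some y))
    (hRin : R (some y) none) (hR : ∀ a b, B (some a) (some b) → R (some a) (some b)) :
    ∀ a b, B a b → R a b
  | none, b, hab => hout b hab ▸ hRout
  | some a, none, hab => hin (some a) hab ▸ hRin
  | some a, some b, hab => hR a b hab

namespace IsSubdivisionIn_s8

variable {W W' V : Type} {B : W → W → Prop} {s : W → W → ℕ} {A : V → V → Prop} {U X : Set V}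
  {f : W → V} {p : W → W → List V}

theorem containsSubdivisionGE_s8 (h : IsSubdivisionIn_s8 B s A U f p) : ContainsSubdivisionGE B s A :=
  ⟨f, p, h.injective, h.chain, h.nodup, h.path_ne, h.disjoint, h.le_length⟩

theorem of_subsingleton [Subsingleton W] (hB : ∀ a, ¬ B a a) {u : V} (hu : u ∈ U) :
    IsSubdivisionIn_s8 B s A U (fun _ => u) (fun _ _ => []) := by
  have hB' : ∀ a b, ¬ B a b := fun a b => Subsingleton.elim a b ▸ hB a
  constructor <;> simp [hB', hu, Function.injective_of_subsingleton]

theorem comap {B' : W' → W' → Prop} {s' : W' → W' → ℕ} {e : W' → W} (he : Function.Injective e)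
    (hB : ∀ a b, B' a b → B (e a) (e b)) (hs : ∀ a b, B' a b → s' a b ≤ s (e a) (e b))
    (h : IsSubdivisionIn_s8 B s A U f p) :
    IsSubdivisionIn_s8 B' s' A U (f ∘ e) (fun a b => p (e a) (e b)) where
  injective := h.injective.comp he
  mem a := h.mem (e a)
  chain a b hab := h.chain _ _ (hB a b hab)
  nodup a b hab := h.nodup _ _ (hB a b hab)
  path_mem a b hab := h.path_mem _ _ (hB a b hab)
  path_ne a b hab x hx c := h.path_ne _ _ (hB a b hab) x hx (e c)
  disjoint a b a' b' hab hab' hne := h.disjoint _ _ _ _ (hB a b hab) (hB a' b' hab') fun heq =>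
    hne (he.prodMap he heq)
  le_length a b hab := (hs a b hab).trans (h.le_length _ _ (hB a b hab))

theorem extend_pendant {B : Option W → Option W → Prop} {s : Option W → Option W → ℕ} {y : W}
    (hout : ∀ z, B none z → z = some y) (hin : ∀ z, B z none → z = some y)
    (h : IsSubdivisionIn_s8 (fun a b => B (some a) (some b)) (fun a b => s (some a) (some b)) A
      (U \ X) f p) (hXU : X ⊆ U) {u : V} {P Q : List V}
    (hcycle : IsCycleOn A (insert (f y) X) (f y) (P ++ u :: Q))
    (hP : s (some y) none ≤ P.length) (hQ : s none (some y) ≤ Q.length) :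
    IsSubdivisionIn_s8 B s A U (fun o => o.elim u f) (pendantPath p P Q) := by
  have huX : u ∈ X := hcycle.mem_of_insert (by simp)
  have hPX : ∀ z ∈ P, z ∈ X := fun z hz => hcycle.mem_of_insert (by simp [hz])
  have hQX : ∀ z ∈ Q, z ∈ X := fun z hz => hcycle.mem_of_insert (by simp [hz])
  have hf : ∀ a, f a ∈ U \ X := h.mem
  have hp : ∀ a b, B (some a) (some b) → ∀ z ∈ p a b, z ∈ U \ X := h.path_mem
  have hnodup : (f y :: (P ++ u :: Q)).Nodup := hcycle.2.1
  have hnodupP : (f y :: (P ++ [u])).Nodup := by grind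
  have hnodupQ : (u :: (Q ++ [f y])).Nodup := by grind
  obtain ⟨hchainP, hchainQ⟩ := hcycle.isChain_of_append_cons
  exact {
    injective := by rintro (_ | a) (_ | b) <;> grind [h.injective]
    mem := Option.rec (hXU huX) fun a => (hf a).1
    chain := forall_arc_of_pendant hout hin hchainQ hchainP h.chain
    nodup := forall_arc_of_pendant hout hin hnodupQ hnodupP h.nodup
    path_mem := forall_arc_of_pendant hout hin (fun z hz => hXU (hQX z hz))
      (fun z hz => hXU (hPX z hz)) fun a b hab z hz => (hp a b hab z hz).1
    path_ne := by
      rintro (_ | a) (_ | b) hab z hz (_ | c) <;> grind [pendantPath, h.path_ne]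
    disjoint := by
      rintro (_ | a) (_ | b) (_ | a') (_ | b') <;> grind [pendantPath, h.disjoint]
    le_length := forall_arc_of_pendant hout hin hQ hP h.le_length }

theorem exists_of_induce_compl {G : SimpleGraph W} {x y : W} (hxy : ∀ z, G.Adj x z ↔ z = y)
    (hXU : X ⊆ U) {f : ({x}ᶜ : Set W) → V} {p : ({x}ᶜ : Set W) → ({x}ᶜ : Set W) → List V}
    (h : IsSubdivisionIn_s8 (G.induce {x}ᶜ).Adj (fun a b => s a b) A (U \ X) f p)
    (hcycle : ∀ v ∈ U \ X, ∃ l,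
      IsCycleOn A (insert v X) v l ∧ s y x + s x y + 2 ≤ (v :: l).length) :
    ∃ f p, IsSubdivisionIn_s8 G.Adj s A U f p := by
  classical
  let e : Option ({x}ᶜ : Set W) ≃ W := Equiv.optionSubtypeNe x
  have hyx : y ≠ x := ((hxy y).2 rfl).ne'
  obtain ⟨l, hl, hlen⟩ := hcycle (f ⟨y, hyx⟩) (h.mem _)
  obtain ⟨P, u, Q, rfl, hP, hQ⟩ : ∃ P u Q, l = P ++ u :: Q ∧ s y x ≤ P.length ∧ s x y ≤ Q.length :=
    exists_eq_append_cons_of_add_lt_length (by rw [List.length_cons] at hlen; omega)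
  have hleaf : ∀ z, G.Adj x (e z) → z = some ⟨y, hyx⟩ := fun z hz =>
    e.injective ((hxy _).1 hz)
  have hext := extend_pendant (B := fun a b => G.Adj (e a) (e b)) (s := fun a b => s (e a) (e b))
    hleaf (fun z hz => hleaf z hz.symm) h hXU hl hP hQ
  exact ⟨_, _, hext.comap e.symm.injective (by simp) (by simp)⟩

end IsSubdivisionIn_s8

theorem exists_isSubdivisionIn_s8 {V : Type} {A : V → V → Prop} {g : ℕ}
    (hgirth : ∀ v l, IsCycleOn A Set.univ v l → g ≤ (v :: l).length) {m : ℕ} {U : Set V}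
    (hU : ¬ AcyclicCoverable A U m) {W : Type} [Finite W] (hW : Nat.card W = m + 1)
    {G : SimpleGraph W} (hG : G.IsTree) {s : W → W → ℕ}
    (hs : ∀ u v, G.Adj u v → s u v + s v u + 2 ≤ g) :
    ∃ f p, IsSubdivisionIn_s8 G.Adj s A U f p := by
  induction m generalizing U W with
  | zero =>
    have : Subsingleton W := (Nat.card_eq_one_iff_unique.1 hW).1
    obtain ⟨u, hu⟩ := nonempty_of_not_acyclicCoverable hU
    exact ⟨_, _, .of_subsingleton (fun _ => G.irrefl) hu⟩
  | succ m ih =>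
    obtain ⟨X, hXU, hX, hXcycle⟩ := exists_acyclicOn_forall_exists_isCycleOn A U
    have : Nontrivial W := Finite.one_lt_card_iff_nontrivial.1 (by omega)
    obtain ⟨x, y, hxy, hG'⟩ := exists_leaf_isTree_induce_compl hG
    have hcard : Nat.card ({x}ᶜ : Set W) = m + 1 := by
      rw [Nat.card_coe_set_eq, Set.ncard_compl, Set.ncard_singleton, hW, Nat.add_sub_cancel]
    obtain ⟨f, p, hfp⟩ := ih (fun hUX => hU (hUX.succ_of_diff hX)) hcard hG' fun u v => hs u v
    refine hfp.exists_of_induce_compl hxy hXU fun v hv => ?_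
    obtain ⟨l, hl⟩ := hXcycle v hv
    have hyx : G.Adj y x := ((hxy y).2 rfl).symm
    exact ⟨l, hl, (hs y x hyx).trans (hgirth v l (hl.mono_s8 (Set.subset_univ _)))⟩

theorem stmt8_general {W : Type} [Finite W] {G : SimpleGraph W} (hG : G.IsTree) {s : W → W → ℕ}
    {g : ℕ} (hs : ∀ u v, G.Adj u v → s u v + s v u + 2 ≤ g) {V : Type} {A : V → V → Prop}
    (hgirth : ∀ v l, IsCycleOn A Set.univ v l → g ≤ (v :: l).length)
    (hchi : ∀ m, DicolorableOn A Set.univ m → Nat.card W ≤ m) :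
    ContainsSubdivisionGE G.Adj s A := by
  have := hG.connected.nonempty
  obtain ⟨m, hW⟩ : ∃ m, Nat.card W = m + 1 := Nat.exists_eq_succ_of_ne_zero Nat.card_pos.ne'
  have hU : ¬ AcyclicCoverable A Set.univ m := fun h => by
    have := hchi m h.dicolorableOn_univ
    omega
  obtain ⟨f, p, h⟩ := exists_isSubdivisionIn_s8 hgirth hU hW hG hs
  exact h.containsSubdivisionGE_s8

/-- Let `k ≥ 1` and let `T` be a bidirected tree on `n` vertices (both arcs of each tree
edge, i.e. arc relation `G.Adj` for a tree `G`). If `T*` is obtained from `T` by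
subdividing every arc at most `k-1` times (arc `(u,v)` subdivided `s u v ≤ k-1` times),
then every digraph `D` with digirth at least `2k` and dichromatic number at least `n`
contains a subdivision of `T*`. -/
theorem stmt8 (k n : ℕ) (hk : 1 ≤ k) (G : SimpleGraph (Fin n)) (hT : G.IsTree)
    (s : Fin n → Fin n → ℕ) (hs : ∀ u v, G.Adj u v → s u v ≤ k - 1)
    {V : Type} [Fintype V] (A : V → V → Prop)
    (hgirth : ∀ v l, IsCycleOn A Set.univ v l → 2 * k ≤ (v :: l).length)
    (hchi : n ≤ dichromaticNumber A) :
    ContainsSubdivisionGE G.Adj s A :=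
  stmt8_general hT (fun u v h => by have := hs u v h; have := hs v u h.symm; omega) hgirth
    fun _ hm => by simpa using hchi.trans (Nat.sInf_le hm)
end
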